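/- Let n ≥ 2 and suppose Λ₀ is a critical lattice of the unit ball B^n which is unique up to rotation, with m(Λ₀) = 1, and suppose the configuration S(Λ₀) of minimal vectors is minimally extreme with eutaxy coefficients υ_x. Then there exist ε > 0 and C > 0 such that for every origin-symmetric convex body K with (1−ε)B^n ⊆ K ⊆ (1+ε)B^n there is a lattice Λ admissible for K satisfying d(Λ)/d(Λ₀) ≤ 1 + Σ_{x∈S(Λ₀)} υ_x (h_K(x) − 1) + C · max_{x∈S(Λ₀)} |h_K(x) − 1|², where h_K(x) = max_{y∈K} ⟨x, y⟩ is the support function of K. -/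

import Mathlib

open scoped RealInnerProductSpace
open Metric MeasureTheory

noncomputable section

abbrev Euc (n : ℕ) := EuclideanSpace ℝ (Fin n)

/-- The rank-one symmetric map `P_x : y ↦ ⟪y, x⟫ • x`. -/
def projMap {F : Type*} [NormedAddCommGroup F] [InnerProductSpace ℝ F] (x : F) :
    F →ₗ[ℝ] F where
  toFun y := (⟪y, x⟫) • x
  map_add' y z := by simp [inner_add_left, add_smul]
  map_smul' c y := by simp [real_inner_smul_left, mul_smul]

/-- A configuration is perfect if the maps `P_x`, `x ∈ S`, span the symmetric maps. -/
def IsPerfectCfg {F : Type*} [NormedAddCommGroup F] [InnerProductSpace ℝ F]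
    (S : Set F) : Prop :=
  ∀ T : F →ₗ[ℝ] F, T.IsSymmetric → T ∈ Submodule.span ℝ (projMap '' S)

/-- A configuration is eutactic if `Id = Σ_{x∈S} υ_x P_x` with `υ_x > 0`, `υ_x = υ_{-x}`. -/
def IsEutacticCfg {F : Type*} [NormedAddCommGroup F] [InnerProductSpace ℝ F]
    (S : Set F) : Prop :=
  ∃ υ : F → ℝ, (∀ x ∈ S, 0 < υ x) ∧ (∀ x ∉ S, υ x = 0) ∧
    (Function.support υ).Finite ∧ (∀ x, υ x = υ (-x)) ∧
    ∑ᶠ x, υ x • projMap x = (LinearMap.id : F →ₗ[ℝ] F)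

/-- A configuration is semi-eutactic if `Id = Σ_{x∈S} υ_x P_x` with `υ_x ≥ 0`, `υ_x = υ_{-x}`. -/
def IsSemiEutacticCfg {F : Type*} [NormedAddCommGroup F] [InnerProductSpace ℝ F]
    (S : Set F) : Prop :=
  ∃ υ : F → ℝ, (∀ x ∈ S, 0 ≤ υ x) ∧ (∀ x ∉ S, υ x = 0) ∧
    (Function.support υ).Finite ∧ (∀ x, υ x = υ (-x)) ∧
    ∑ᶠ x, υ x • projMap x = (LinearMap.id : F →ₗ[ℝ] F)

/-- A configuration is extreme if it is perfect and eutactic. -/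
def IsExtremeCfg {F : Type*} [NormedAddCommGroup F] [InnerProductSpace ℝ F]
    (S : Set F) : Prop :=
  IsPerfectCfg S ∧ IsEutacticCfg S

/-- Hilbert–Schmidt (Frobenius) norm of a linear map on `ℝ^n`. -/
def frobNorm {n : ℕ} (T : Euc n →ₗ[ℝ] Euc n) : ℝ :=
  Real.sqrt (∑ j, ∑ i, (T (EuclideanSpace.single j 1) i) ^ 2)

/-- The lattice `T ℤ^n` as a set of points. -/
def latticeSet {n : ℕ} (T : Euc n →ₗ[ℝ] Euc n) : Set (Euc n) :=
  {v | ∃ z : Fin n → ℤ, v = T (∑ i, (z i : ℝ) • EuclideanSpace.single i 1)}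

/-- A set is an (n-dimensional) lattice if it is `T ℤ^n` for an invertible `T`. -/
def IsLattice {n : ℕ} (Λ : Set (Euc n)) : Prop :=
  ∃ T : Euc n →ₗ[ℝ] Euc n, LinearMap.det T ≠ 0 ∧ Λ = latticeSet T

/-- The determinant `d(Λ) = |det T|` of a lattice. -/
def latDet {n : ℕ} (Λ : Set (Euc n)) : ℝ :=
  sInf {d | ∃ T : Euc n →ₗ[ℝ] Euc n, Λ = latticeSet T ∧ d = |LinearMap.det T|}

/-- The metric `δ(Λ, Λ') = inf ‖T - T'‖` on the space of lattices. -/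
def latDist {n : ℕ} (Λ Λ' : Set (Euc n)) : ℝ :=
  sInf {d | ∃ T T' : Euc n →ₗ[ℝ] Euc n,
    Λ = latticeSet T ∧ Λ' = latticeSet T' ∧ d = frobNorm (T - T')}

/-- The minimal norm `m(Λ)`. -/
def minNorm {n : ℕ} (Λ : Set (Euc n)) : ℝ :=
  sInf {r | ∃ x ∈ Λ, x ≠ 0 ∧ r = ‖x‖ ^ 2}

/-- The set `S(Λ)` of minimal vectors of a lattice. -/
def minVecs {n : ℕ} (Λ : Set (Euc n)) : Set (Euc n) :=
  {x | x ∈ Λ ∧ x ≠ 0 ∧ ‖x‖ ^ 2 = minNorm Λ}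

/-- An origin-symmetric convex body. -/
structure IsSymCB {n : ℕ} (K : Set (Euc n)) : Prop where
  convex : Convex ℝ K
  compact : IsCompact K
  nonempty_interior : (interior K).Nonempty
  symm : -K = K

/-- A lattice is admissible for a body if it meets the interior only at the origin. -/
def IsAdmissible {n : ℕ} (Λ K : Set (Euc n)) : Prop :=
  Λ ∩ interior K ⊆ {0}

/-- The critical determinant `d_K`. -/
def critDet {n : ℕ} (K : Set (Euc n)) : ℝ :=
  sInf {d | ∃ Λ : Set (Euc n), IsLattice Λ ∧ IsAdmissible Λ K ∧ d = latDet Λ}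

/-- A critical lattice of `K`: an admissible lattice attaining the critical determinant. -/
def IsCriticalLattice {n : ℕ} (Λ K : Set (Euc n)) : Prop :=
  IsLattice Λ ∧ IsAdmissible Λ K ∧ latDet Λ = critDet K

/-- The optimal lattice packing fraction `φ(K) = 2⁻ⁿ vol(K) / d_K`. -/
def packFrac {n : ℕ} (K : Set (Euc n)) : ℝ :=
  (volume K).toReal / (2 ^ n * critDet K)

/-- The closed unit ball `Bⁿ`. -/
def unitBall (n : ℕ) : Set (Euc n) := Metric.closedBall 0 1

/-- The support function of a body. -/
def suppFn {n : ℕ} (K : Set (Euc n)) (x : Euc n) : ℝ :=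
  sSup ((fun y => ⟪x, y⟫) '' K)

/-- The radial function of a body. -/
def radFn {n : ℕ} (K : Set (Euc n)) (x : Euc n) : ℝ :=
  sSup {t : ℝ | 0 ≤ t ∧ t • x ∈ K}

/-!
Let `S` be the set of minimal vectors of `Λ₀`, and look for a lattice `(id + M) Λ₀` with `M` small
and symmetric. A minimal vector `x` is moved onto the supporting hyperplane of `K` with normal `x`
as soon as `⟪x, M x⟫ = h_K(x) - 1`. These linear conditions on `M` are independent, because
`⟪x, M x⟫ = tr (M P_x)` and the maps `P_x`, with `x ∈ S` taken up to sign, are a basis of the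
symmetric maps. So they have a solution of size `O(max |h_K - 1|)`, and then the other nonzero
vectors of `Λ₀`, whose lengths are bounded away from `1`, stay outside `K`: the lattice is
admissible. Eutaxy gives `tr M = ∑ υ_x (h_K(x) - 1)`, and as `t ≤ exp (t - 1)` holds for each
eigenvalue `t` of `id + M`, the determinant is at most `exp (tr M)`.
-/

open scoped Topology

section RankOneMaps

variable {F : Type*} [NormedAddCommGroup F] [InnerProductSpace ℝ F]

lemma projMap_apply (x y : F) : projMap x y = ⟪y, x⟫ • x := rfl

lemma projMap_neg (x : F) : projMap (-x) = projMap x := by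
  ext y
  simp only [projMap_apply, inner_neg_right, neg_smul_neg]

lemma eq_or_eq_neg_of_projMap_eq {x y : F} (h : projMap x = projMap y) : x = y ∨ x = -y := by
  have hform (z : F) : ⟪z, x⟫ ^ 2 = ⟪z, y⟫ ^ 2 := by
    have hz := congrArg (fun T => ⟪z, T z⟫) h
    simpa only [projMap_apply, real_inner_smul_right, sq] using hz
  have hx := hform x
  have hy := hform y
  rw [real_inner_self_eq_norm_sq] at hx hy
  rw [real_inner_comm] at hy
  have hnorm : ‖x‖ = ‖y‖ := by
    have h4 : ‖x‖ ^ 4 = ‖y‖ ^ 4 := by linarith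
    exact (pow_left_inj₀ (norm_nonneg x) (norm_nonneg y) four_ne_zero).mp h4
  rcases sq_eq_sq_iff_eq_or_eq_neg.mp hx with hinner | hinner
  · left
    rw [← sub_eq_zero, ← norm_eq_zero, ← sq_eq_zero_iff, norm_sub_sq_real, ← hinner, hnorm]
    ring
  · right
    rw [← sub_eq_zero, sub_neg_eq_add, ← norm_eq_zero, ← sq_eq_zero_iff, norm_add_sq_real, ← hnorm]
    linarith

lemma projMap_isSymmetric (x : F) : (projMap x).IsSymmetric := fun y z => by
  simp only [projMap_apply, real_inner_smul_left, real_inner_smul_right, real_inner_comm x]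
  ring

lemma two_mul_ncard_image_projMap_le {S : Set F} (hfin : S.Finite) (hneg : ∀ x ∈ S, -x ∈ S)
    (hzero : 0 ∉ S) : 2 * (projMap '' S).ncard ≤ S.ncard := by
  classical
  have : IsAddTorsionFree F := .of_isTorsionFree ℝ F
  rw [Set.ncard_eq_toFinset_card S hfin, Set.ncard_eq_toFinset_card _ (hfin.image projMap),
    hfin.toFinset_image]
  refine Finset.mul_card_image_le_card _ 2 fun P hP => ?_
  obtain ⟨x, hx, rfl⟩ := Finset.mem_image.mp hP
  rw [Set.Finite.mem_toFinset] at hx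
  have hx_ne : x ≠ -x := fun h => ne_of_mem_of_not_mem hx hzero (self_eq_neg.mp h)
  have hpair : {x, -x} ⊆ {y ∈ hfin.toFinset | projMap y = projMap x} := by
    simp [Finset.insert_subset_iff, hx, hneg x hx, projMap_neg]
  exact (Finset.card_pair hx_ne).ge.trans (Finset.card_le_card hpair)

variable [FiniteDimensional ℝ F]

lemma trace_comp_projMap (M : F →ₗ[ℝ] F) (x : F) :
    LinearMap.trace ℝ F (M ∘ₗ projMap x) = ⟪x, M x⟫ := by
  have hcomp : M ∘ₗ projMap x = (innerₛₗ ℝ x).smulRight (M x) := by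
    ext y
    simp [projMap_apply, real_inner_comm]
  rw [hcomp, LinearMap.trace_smulRight, innerₛₗ_apply_apply]

lemma eq_zero_of_trace_comp_self_eq_zero {M : F →ₗ[ℝ] F} (hM : M.IsSymmetric)
    (h : LinearMap.trace ℝ F (M ∘ₗ M) = 0) : M = 0 := by
  let b := stdOrthonormalBasis ℝ F
  have hsum : ∑ i, ‖M (b i)‖ ^ 2 = 0 := by
    rw [← h, LinearMap.trace_eq_sum_inner _ b]
    refine Finset.sum_congr rfl fun i _ => ?_
    rw [LinearMap.comp_apply, ← hM, real_inner_self_eq_norm_sq]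
  rw [Finset.sum_eq_zero_iff_of_nonneg fun i _ => by positivity] at hsum
  refine b.toBasis.ext fun i => ?_
  simpa using hsum i (Finset.mem_univ i)

lemma trace_eq_finsum_mem_of_eutaxy {S : Set F} (hfin : S.Finite) {υ : F → ℝ}
    (heutaxy : ∑ᶠ x ∈ S, υ x • projMap x = LinearMap.id) (M : F →ₗ[ℝ] F) :
    LinearMap.trace ℝ F M = ∑ᶠ x ∈ S, υ x * ⟪x, M x⟫ := by
  let traceWith : (F →ₗ[ℝ] F) →ₗ[ℝ] ℝ :=
    LinearMap.trace ℝ F ∘ₗ LinearMap.mulLeft ℝ (A := Module.End ℝ F) M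
  calc LinearMap.trace ℝ F M = traceWith (∑ᶠ x ∈ S, υ x • projMap x) := by
        rw [heutaxy]; rfl
    _ = ∑ᶠ x ∈ S, traceWith (υ x • projMap x) := traceWith.toAddMonoidHom.map_finsum_mem _ hfin
    _ = ∑ᶠ x ∈ S, υ x * ⟪x, M x⟫ := by
        refine finsum_mem_congr rfl fun x _ => ?_
        rw [map_smul, smul_eq_mul, ← trace_comp_projMap]; rfl

end RankOneMaps

section SymmetricMaps

variable {F : Type*} [NormedAddCommGroup F] [InnerProductSpace ℝ F]

/-- The map whose matrix in the orthonormal basis `b` has the entry `f s(i, j)` at `(i, j)`: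
indexing entries by unordered pairs makes every symmetric matrix, and only those, occur. -/
def symmetricMapOfSym2 {ι : Type*} [Fintype ι] [DecidableEq ι] (b : OrthonormalBasis ι ℝ F) :
    (Sym2 ι → ℝ) →ₗ[ℝ] (F →ₗ[ℝ] F) :=
  (Matrix.toLin b.toBasis b.toBasis).toLinearMap ∘ₗ
    { toFun f := Matrix.of fun i j => f s(i, j)
      map_add' _ _ := rfl
      map_smul' _ _ := rfl }

lemma symmetricMapOfSym2_injective {ι : Type*} [Fintype ι] [DecidableEq ι]
    (b : OrthonormalBasis ι ℝ F) : Function.Injective (symmetricMapOfSym2 b) := by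
  intro f g h
  have hmatrix := (Matrix.toLin b.toBasis b.toBasis).injective h
  funext p
  induction p using Sym2.ind with
  | _ i j => exact congrFun (congrFun hmatrix i) j

lemma symmetricMapOfSym2_isSymmetric {ι : Type*} [Fintype ι] [DecidableEq ι]
    (b : OrthonormalBasis ι ℝ F) (f : Sym2 ι → ℝ) : (symmetricMapOfSym2 b f).IsSymmetric := by
  have : FiniteDimensional ℝ F := b.toBasis.finiteDimensional_of_finite
  rw [LinearMap.isSymmetric_iff_isSelfAdjoint]
  refine IsSelfAdjoint.map (x := Matrix.of fun i j => f s(i, j)) ?_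
    (LinearMap.toMatrixOrthonormal b).symm
  ext i j
  simp [Matrix.star_apply, Sym2.eq_swap]

variable [FiniteDimensional ℝ F]

lemma choose_two_le_finrank_of_isSymmetric_mem {V : Submodule ℝ (F →ₗ[ℝ] F)}
    (hV : ∀ T : F →ₗ[ℝ] F, T.IsSymmetric → T ∈ V) :
    (Module.finrank ℝ F + 1).choose 2 ≤ Module.finrank ℝ V := by
  let Φ := symmetricMapOfSym2 (stdOrthonormalBasis ℝ F)
  calc (Module.finrank ℝ F + 1).choose 2
      = Module.finrank ℝ (Sym2 (Fin (Module.finrank ℝ F)) → ℝ) := by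
        rw [Module.finrank_fintype_fun_eq_card, Sym2.card, Fintype.card_fin]
    _ = Module.finrank ℝ (LinearMap.range Φ) :=
        (LinearMap.finrank_range_of_inj (symmetricMapOfSym2_injective _)).symm
    _ ≤ Module.finrank ℝ V := by
        refine Submodule.finrank_mono ?_
        rintro _ ⟨f, rfl⟩
        exact hV _ (symmetricMapOfSym2_isSymmetric _ f)

-- The maps `P_x` span a space of dimension at least `n (n + 1) / 2`, and as `P_x = P_{-x}` there
-- are at most that many of them.
lemma IsPerfectCfg.linearIndepOn_image_projMap {S : Set F} (hS : IsPerfectCfg S)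
    (hfin : S.Finite) (hneg : ∀ x ∈ S, -x ∈ S) (hzero : 0 ∉ S)
    (hcard : S.ncard ≤ Module.finrank ℝ F * (Module.finrank ℝ F + 1)) :
    LinearIndepOn ℝ id (projMap '' S) := by
  have : Fintype (projMap '' S) := (hfin.image projMap).fintype
  change LinearIndependent ℝ (Subtype.val : projMap '' S → (F →ₗ[ℝ] F))
  rw [linearIndependent_iff_card_le_finrank_span, Subtype.range_coe, ← Nat.card_eq_fintype_card,
    Nat.card_coe_set_eq]
  refine le_trans ?_ (choose_two_le_finrank_of_isSymmetric_mem hS)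
  have htwo := two_mul_ncard_image_projMap_le hfin hneg hzero
  rw [Nat.choose_two_right, Nat.add_sub_cancel, Nat.le_div_iff_mul_le two_pos]
  linarith

lemma exists_linearMap_isSymmetric_trace_comp_eq {ι : Type*} {P : ι → F →ₗ[ℝ] F}
    (hP : LinearIndependent ℝ P) (hsymm : ∀ i, (P i).IsSymmetric) :
    ∃ R : (ι → ℝ) →ₗ[ℝ] (F →ₗ[ℝ] F), ∀ a, (R a).IsSymmetric ∧
      ∀ i, LinearMap.trace ℝ F (R a ∘ₗ P i) = a i := by
  have := hP.finite
  cases nonempty_fintype ι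
  let comb := Fintype.linearCombination ℝ P
  have comb_symm (a : ι → ℝ) : (comb a).IsSymmetric :=
    LinearMap.isSymmetric_sum _ fun i _ => (hsymm i).smul (conj_trivial _)
  -- The trace form is definite on symmetric maps, so its Gram matrix on the family is invertible.
  let gram : (ι → ℝ) →ₗ[ℝ] (ι → ℝ) := LinearMap.pi fun i =>
    LinearMap.trace ℝ F ∘ₗ LinearMap.mulRight ℝ (A := Module.End ℝ F) (P i) ∘ₗ comb
  have gram_injective : Function.Injective gram := by
    rw [injective_iff_map_eq_zero]
    intro a ha
    have hcomp (T : F →ₗ[ℝ] F) : T ∘ₗ comb a = ∑ i, a i • (T ∘ₗ P i) := by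
      ext y
      simp [comb, Fintype.linearCombination_apply]
    have htrace : LinearMap.trace ℝ F (comb a ∘ₗ comb a) = ∑ i, a i * gram a i := by
      rw [hcomp, map_sum]
      exact Finset.sum_congr rfl fun i _ => map_smul _ _ _
    have hzero : comb a = 0 := eq_zero_of_trace_comp_self_eq_zero (comb_symm a) <| by
      simp [htrace, ha]
    exact funext (Fintype.linearIndependent_iff.mp hP a hzero)
  let e := LinearEquiv.ofInjectiveEndo gram gram_injective
  exact ⟨comb ∘ₗ e.symm.toLinearMap, fun a =>
    ⟨comb_symm _, fun i => congrFun (e.apply_symm_apply a) i⟩⟩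

lemma exists_isSymmetric_inner_eq {S : Set F} (hind : LinearIndepOn ℝ id (projMap '' S)) :
    ∃ c : ℝ, ∀ (g : F → ℝ) (ε : ℝ), g.Even → 0 ≤ ε → (∀ x ∈ S, |g x| ≤ ε) →
      ∃ M : F →ₗ[ℝ] F, M.IsSymmetric ∧ (∀ x ∈ S, ⟪x, M x⟫ = g x) ∧
        ∀ y, ‖M y‖ ≤ c * ε * ‖y‖ := by
  have : Finite (projMap '' S) := hind.linearIndependent.finite
  cases nonempty_fintype (projMap '' S)
  have hsymm : ∀ P : projMap '' S, (P : F →ₗ[ℝ] F).IsSymmetric := by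
    rintro ⟨_, x, _, rfl⟩
    exact projMap_isSymmetric x
  obtain ⟨R, hR⟩ := exists_linearMap_isSymmetric_trace_comp_eq hind.linearIndependent hsymm
  refine ⟨‖R.toContinuousBilinearMap‖, fun g ε hg hε hgε => ?_⟩
  choose point hpoint projMap_point using fun P : projMap '' S => P.2
  let a : projMap '' S → ℝ := g ∘ point
  have ha : ‖a‖ ≤ ε := (pi_norm_le_iff_of_nonneg hε).mpr fun P => hgε _ (hpoint P)
  refine ⟨R a, (hR a).1, fun x hx => ?_, fun y => ?_⟩
  · rw [← trace_comp_projMap]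
    refine ((hR a).2 ⟨projMap x, x, hx, rfl⟩).trans ?_
    rcases eq_or_eq_neg_of_projMap_eq (projMap_point ⟨projMap x, x, hx, rfl⟩) with h | h
    · exact congrArg g h
    · exact (congrArg g h).trans (hg x)
  · refine (R.toContinuousBilinearMap.le_opNorm₂ a y).trans ?_
    gcongr

lemma abs_det_le_exp_trace_sub_finrank {A : F →ₗ[ℝ] F} (hA : A.IsPositive) :
    |LinearMap.det A| ≤ Real.exp (LinearMap.trace ℝ F A - Module.finrank ℝ F) := by
  let μ := hA.isSymmetric.eigenvalues rfl
  have hμ (i) : 0 ≤ μ i := hA.nonneg_eigenvalues rfl i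
  have hdet : LinearMap.det A = ∏ i, μ i := hA.isSymmetric.det_eq_prod_eigenvalues rfl
  have htrace : LinearMap.trace ℝ F A = ∑ i, μ i := hA.isSymmetric.trace_eq_sum_eigenvalues rfl
  calc |LinearMap.det A| = ∏ i, μ i := by
        rw [hdet, abs_of_nonneg (Finset.prod_nonneg fun i _ => hμ i)]
    _ ≤ ∏ i, Real.exp (μ i - 1) := Finset.prod_le_prod (fun i _ => hμ i) fun i _ => by
        linarith [Real.add_one_le_exp (μ i - 1)]
    _ = Real.exp (LinearMap.trace ℝ F A - Module.finrank ℝ F) := by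
        rw [← Real.exp_sum, htrace]
        simp [Finset.sum_sub_distrib]

end SymmetricMaps

section Perturbations

lemma one_sub_mul_norm_le_norm_id_add {E : Type*} [NormedAddCommGroup E] [Module ℝ E]
    {M : E →ₗ[ℝ] E} {κ : ℝ} (hM : ∀ y, ‖M y‖ ≤ κ * ‖y‖) (y : E) :
    (1 - κ) * ‖y‖ ≤ ‖(LinearMap.id + M : E →ₗ[ℝ] E) y‖ := by
  have htriangle := norm_sub_le_norm_add y (M y)
  rw [LinearMap.add_apply, LinearMap.id_apply]
  linarith [hM y]

lemma det_id_add_ne_zero {E : Type*} [NormedAddCommGroup E] [Module ℝ E]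
    {M : E →ₗ[ℝ] E} {κ : ℝ} (hM : ∀ y, ‖M y‖ ≤ κ * ‖y‖) (hκ : κ < 1) :
    LinearMap.det (LinearMap.id + M) ≠ 0 := by
  intro hdet
  refine (LinearMap.bot_lt_ker_of_det_eq_zero hdet).ne' (LinearMap.ker_eq_bot'.mpr fun y hy => ?_)
  have hlower := one_sub_mul_norm_le_norm_id_add hM y
  rw [hy, norm_zero] at hlower
  exact norm_le_zero_iff.mp (nonpos_of_mul_nonpos_right hlower (sub_pos.mpr hκ))

lemma isPositive_id_add {F : Type*} [NormedAddCommGroup F] [InnerProductSpace ℝ F]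
    {M : F →ₗ[ℝ] F} {κ : ℝ} (hsymm : M.IsSymmetric) (hM : ∀ y, ‖M y‖ ≤ κ * ‖y‖) (hκ : κ ≤ 1) :
    (LinearMap.id + M).IsPositive := by
  refine ⟨LinearMap.IsSymmetric.id.add hsymm, fun y => ?_⟩
  have hbound : |⟪M y, y⟫| ≤ ‖y‖ * ‖y‖ := by
    calc |⟪M y, y⟫| ≤ ‖M y‖ * ‖y‖ := abs_real_inner_le_norm _ _
      _ ≤ κ * ‖y‖ * ‖y‖ := by gcongr; exact hM y
      _ ≤ 1 * ‖y‖ * ‖y‖ := by gcongr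
      _ = ‖y‖ * ‖y‖ := by rw [one_mul]
  rw [RCLike.re_to_real, LinearMap.add_apply, LinearMap.id_apply, inner_add_left,
    real_inner_self_eq_norm_mul_norm]
  linarith [neg_le_of_abs_le hbound]

lemma exists_pos_perturbation_size (c V : ℝ) {r : ℝ} (hr : 1 < r) :
    ∃ ε > (0 : ℝ), ε ≤ 1 ∧ c * ε < 1 ∧ V * ε ≤ 1 ∧ 1 + ε < (1 - c * ε) * r := by
  have near_zero {f g : ℝ → ℝ} (hf : Continuous f) (hg : Continuous g) (h : f 0 < g 0) :
      ∀ᶠ ε in 𝓝[>] 0, f ε < g ε :=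
    nhdsWithin_le_nhds (hf.continuousAt.eventually_lt hg.continuousAt h)
  have h_one : ∀ᶠ ε : ℝ in 𝓝[>] 0, ε < 1 :=
    near_zero continuous_id continuous_const one_pos
  have hc : ∀ᶠ ε : ℝ in 𝓝[>] 0, c * ε < 1 := near_zero (by fun_prop) continuous_const (by simp)
  have hV : ∀ᶠ ε : ℝ in 𝓝[>] 0, V * ε < 1 := near_zero (by fun_prop) continuous_const (by simp)
  have hgap : ∀ᶠ ε : ℝ in 𝓝[>] 0, 1 + ε < (1 - c * ε) * r :=
    near_zero (by fun_prop) (by fun_prop) (by simpa using hr)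
  obtain ⟨ε, ⟨⟨⟨hε1, hεc⟩, hεV⟩, hεr⟩, hε⟩ :=
    ((((h_one.and hc).and hV).and hgap).and self_mem_nhdsWithin).exists
  exact ⟨ε, hε, hε1.le, hεc, hεV.le, hεr⟩

end Perturbations

section Lattices

variable {n : ℕ} {Λ : Set (Euc n)}

lemma latticeSet_comp (A T : Euc n →ₗ[ℝ] Euc n) : latticeSet (A ∘ₗ T) = A '' latticeSet T := by
  ext v
  constructor
  · rintro ⟨z, rfl⟩
    exact ⟨_, ⟨z, rfl⟩, rfl⟩
  · rintro ⟨_, ⟨z, rfl⟩, rfl⟩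
    exact ⟨z, rfl⟩

lemma IsLattice.image (hΛ : IsLattice Λ) {A : Euc n →ₗ[ℝ] Euc n} (hA : LinearMap.det A ≠ 0) :
    IsLattice (A '' Λ) := by
  obtain ⟨T, hT, rfl⟩ := hΛ
  refine ⟨A ∘ₗ T, ?_, (latticeSet_comp A T).symm⟩
  rw [LinearMap.det_comp]
  exact mul_ne_zero hA hT

lemma latDet_nonneg (Λ : Set (Euc n)) : 0 ≤ latDet Λ := by
  refine Real.sInf_nonneg ?_
  rintro _ ⟨T, _, rfl⟩
  exact abs_nonneg _

lemma latDet_latticeSet_le (T : Euc n →ₗ[ℝ] Euc n) : latDet (latticeSet T) ≤ |LinearMap.det T| := by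
  refine csInf_le ⟨0, ?_⟩ ⟨T, rfl, rfl⟩
  rintro _ ⟨T', _, rfl⟩
  exact abs_nonneg _

lemma IsLattice.latDet_image_div_le (hΛ : IsLattice Λ) {A : Euc n →ₗ[ℝ] Euc n}
    (hA : LinearMap.det A ≠ 0) : latDet (A '' Λ) / latDet Λ ≤ |LinearMap.det A| := by
  have hA_pos : 0 < |LinearMap.det A| := abs_pos.mpr hA
  refine div_le_of_le_mul₀ (latDet_nonneg _) hA_pos.le ?_
  rw [← div_le_iff₀' hA_pos]
  obtain ⟨T₀, _, hΛT₀⟩ := hΛ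
  refine le_csInf ⟨_, T₀, hΛT₀, rfl⟩ ?_
  rintro _ ⟨T, rfl, rfl⟩
  rw [div_le_iff₀' hA_pos, ← abs_mul, ← LinearMap.det_comp, ← latticeSet_comp]
  exact latDet_latticeSet_le (A ∘ₗ T)

lemma IsLattice.latDet_image_id_add_div_le_exp_trace (hΛ : IsLattice Λ) {M : Euc n →ₗ[ℝ] Euc n}
    {κ : ℝ} (hsymm : M.IsSymmetric) (hM : ∀ y, ‖M y‖ ≤ κ * ‖y‖) (hκ : κ < 1) :
    latDet ((LinearMap.id + M : Euc n →ₗ[ℝ] Euc n) '' Λ) / latDet Λ ≤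
      Real.exp (LinearMap.trace ℝ (Euc n) M) := by
  have htrace : LinearMap.trace ℝ (Euc n) (LinearMap.id + M) - Module.finrank ℝ (Euc n) =
      LinearMap.trace ℝ (Euc n) M := by
    rw [map_add, LinearMap.trace_id, add_sub_cancel_left]
  calc _ ≤ |LinearMap.det (LinearMap.id + M)| := hΛ.latDet_image_div_le (det_id_add_ne_zero hM hκ)
    _ ≤ Real.exp (LinearMap.trace ℝ (Euc n) M) :=
      htrace ▸ abs_det_le_exp_trace_sub_finrank (isPositive_id_add hsymm hM hκ.le)

lemma IsLattice.exists_eq_span_basis (hΛ : IsLattice Λ) :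
    ∃ b : Module.Basis (Fin n) ℝ (Euc n), Λ = Submodule.span ℤ (Set.range b) := by
  obtain ⟨T, hT, rfl⟩ := hΛ
  refine ⟨(EuclideanSpace.basisFun (Fin n) ℝ).toBasis.map (T.equivOfDetNeZero hT), ?_⟩
  ext v
  rw [SetLike.mem_coe, Submodule.mem_span_range_iff_exists_fun]
  refine exists_congr fun z => ?_
  simp [eq_comm (a := v), ← Int.cast_smul_eq_zsmul ℝ]

lemma IsLattice.neg_mem (hΛ : IsLattice Λ) {x : Euc n} (hx : x ∈ Λ) : -x ∈ Λ := by
  obtain ⟨b, rfl⟩ := hΛ.exists_eq_span_basis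
  exact Submodule.neg_mem _ hx

lemma IsLattice.finite_inter_closedBall (hΛ : IsLattice Λ) (r : ℝ) :
    (Λ ∩ closedBall 0 r).Finite := by
  obtain ⟨b, rfl⟩ := hΛ.exists_eq_span_basis
  rw [Set.inter_comm]
  exact ZSpan.setFinite_inter b isBounded_closedBall

lemma norm_of_mem_minVecs {x : Euc n} (hx : x ∈ minVecs Λ) : ‖x‖ = √(minNorm Λ) := by
  rw [← hx.2.2, Real.sqrt_sq (norm_nonneg x)]

lemma zero_notMem_minVecs : (0 : Euc n) ∉ minVecs Λ := fun h => h.2.1 rfl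

lemma IsLattice.neg_mem_minVecs (hΛ : IsLattice Λ) {x : Euc n} (hx : x ∈ minVecs Λ) :
    -x ∈ minVecs Λ :=
  ⟨hΛ.neg_mem hx.1, neg_ne_zero.mpr hx.2.1, (norm_neg x).symm ▸ hx.2.2⟩

lemma IsLattice.finite_minVecs (hΛ : IsLattice Λ) : (minVecs Λ).Finite :=
  (hΛ.finite_inter_closedBall √(minNorm Λ)).subset fun _ hx =>
    ⟨hx.1, mem_closedBall_zero_iff.mpr (norm_of_mem_minVecs hx).le⟩

lemma IsLattice.linearIndepOn_image_projMap_minVecs (hΛ : IsLattice Λ)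
    (hperfect : IsPerfectCfg (minVecs Λ)) (hcard : (minVecs Λ).ncard ≤ n * (n + 1)) :
    LinearIndepOn ℝ id (projMap '' minVecs Λ) :=
  hperfect.linearIndepOn_image_projMap hΛ.finite_minVecs (fun _ hx => hΛ.neg_mem_minVecs hx)
    zero_notMem_minVecs (by rwa [finrank_euclideanSpace_fin])

lemma sqrt_minNorm_lt_norm {y : Euc n} (hy : y ∈ Λ) (hy0 : y ≠ 0) (hymin : y ∉ minVecs Λ) :
    √(minNorm Λ) < ‖y‖ := by
  have hle : minNorm Λ ≤ ‖y‖ ^ 2 := by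
    refine csInf_le ⟨0, ?_⟩ ⟨y, hy, hy0, rfl⟩
    rintro _ ⟨x, _, _, rfl⟩
    positivity
  have hne : minNorm Λ ≠ ‖y‖ ^ 2 := fun h => hymin ⟨hy, hy0, h.symm⟩
  rw [Real.sqrt_lt' (norm_pos_iff.mpr hy0)]
  exact hle.lt_of_ne hne

lemma IsLattice.exists_sqrt_minNorm_lt_le_norm (hΛ : IsLattice Λ) :
    ∃ r > √(minNorm Λ), ∀ y ∈ Λ, y ≠ 0 → y ∉ minVecs Λ → r ≤ ‖y‖ := by
  set m := √(minNorm Λ)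
  let short : Set (Euc n) := {y | y ∈ Λ ∩ closedBall 0 (m + 1) ∧ y ≠ 0 ∧ y ∉ minVecs Λ}
  have short_finite : short.Finite :=
    (hΛ.finite_inter_closedBall (m + 1)).subset fun _ hy => hy.1
  have short_bound : ∀ᶠ r in 𝓝[>] m, ∀ y ∈ short, r ≤ ‖y‖ :=
    short_finite.eventually_all.mpr fun y hy =>
      Filter.mem_of_superset (Ioc_mem_nhdsGT (sqrt_minNorm_lt_norm hy.1.1 hy.2.1 hy.2.2))
        fun r hr => hr.2
  obtain ⟨r, hr_short, hmr, hr_le⟩ :=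
    (short_bound.and (Ioc_mem_nhdsGT (lt_add_one m))).exists
  refine ⟨r, hmr, fun y hy hy0 hymin => ?_⟩
  by_cases hy_short : ‖y‖ ≤ m + 1
  · exact hr_short y ⟨⟨hy, mem_closedBall_zero_iff.mpr hy_short⟩, hy0, hymin⟩
  · exact hr_le.trans (not_le.mp hy_short).le

end Lattices

section SupportFunction

variable {n : ℕ} {K : Set (Euc n)}

lemma inner_le_suppFn (hK : Bornology.IsBounded K) (x : Euc n) {y : Euc n} (hy : y ∈ K) :
    ⟪x, y⟫ ≤ suppFn K x := by
  have hbdd : BddAbove ((fun y => ⟪x, y⟫) '' K) := by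
    obtain ⟨R, hR⟩ := hK.exists_norm_le
    refine ⟨‖x‖ * R, ?_⟩
    rintro _ ⟨z, hz, rfl⟩
    exact (real_inner_le_norm x z).trans (by gcongr; exact hR z hz)
  exact le_csSup hbdd ⟨y, hy, rfl⟩

lemma suppFn_even (hK : -K = K) : (suppFn K).Even := by
  intro x
  have himage : (fun y => ⟪-x, y⟫) '' K = (fun y => ⟪x, y⟫) '' (-K) := by
    rw [← Set.image_neg_eq_neg, Set.image_image]
    simp only [inner_neg_left, inner_neg_right]
  rw [suppFn, himage, hK, suppFn]

lemma inner_lt_suppFn_of_mem_interior (hK : Bornology.IsBounded K) {x y : Euc n} (hx : x ≠ 0)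
    (hy : y ∈ interior K) : ⟪x, y⟫ < suppFn K x := by
  have hray : Filter.Tendsto (fun t : ℝ => y + t • x) (𝓝[>] 0) (𝓝 y) :=
    (Continuous.tendsto' (by fun_prop) 0 y (by simp)).mono_left nhdsWithin_le_nhds
  obtain ⟨t, hmem, (ht : 0 < t)⟩ :=
    ((hray.eventually (mem_interior_iff_mem_nhds.mp hy)).and self_mem_nhdsWithin).exists
  calc ⟪x, y⟫ < ⟪x, y⟫ + t * ‖x‖ ^ 2 := by
        have := norm_pos_iff.mpr hx
        exact lt_add_of_pos_right _ (by positivity)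
    _ = ⟪x, y + t • x⟫ := by
        rw [inner_add_right, real_inner_smul_right, real_inner_self_eq_norm_sq]
    _ ≤ suppFn K x := inner_le_suppFn hK x hmem

lemma abs_suppFn_sub_one_le {ε : ℝ} (hε : ε ≤ 1) (hin : closedBall 0 (1 - ε) ⊆ K)
    (hout : K ⊆ closedBall 0 (1 + ε)) {x : Euc n} (hx : ‖x‖ = 1) : |suppFn K x - 1| ≤ ε := by
  have hmem : (1 - ε) • x ∈ K := by
    apply hin
    simp [norm_smul, hx, abs_of_nonneg (sub_nonneg.mpr hε)]
  have hlower : 1 - ε ≤ suppFn K x := by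
    simpa [real_inner_smul_right, hx] using
      inner_le_suppFn (isBounded_closedBall.subset hout) x hmem
  have hupper : suppFn K x ≤ 1 + ε := by
    refine csSup_le ⟨_, _, hmem, rfl⟩ ?_
    rintro _ ⟨y, hy, rfl⟩
    calc ⟪x, y⟫ ≤ ‖x‖ * ‖y‖ := real_inner_le_norm x y
      _ ≤ 1 + ε := by rw [hx, one_mul]; exact mem_closedBall_zero_iff.mp (hout hy)
  exact abs_sub_le_iff.mpr ⟨by linarith, by linarith⟩

lemma isAdmissible_image {Λ : Set (Euc n)} {A : Euc n →ₗ[ℝ] Euc n} {R : ℝ}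
    (hKR : K ⊆ closedBall 0 R) (hmin : ∀ x ∈ minVecs Λ, suppFn K x ≤ ⟪x, A x⟫)
    (hlong : ∀ y ∈ Λ, y ≠ 0 → y ∉ minVecs Λ → R < ‖A y‖) : IsAdmissible (A '' Λ) K := by
  rintro _ ⟨⟨y, hy, rfl⟩, hyK⟩
  rw [Set.mem_singleton_iff]
  by_contra hAy
  have hy0 : y ≠ 0 := fun h => hAy (by rw [h, map_zero])
  by_cases hymin : y ∈ minVecs Λ
  · exact (inner_lt_suppFn_of_mem_interior (isBounded_closedBall.subset hKR) hy0 hyK).not_ge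
      (hmin y hymin)
  · exact (hlong y hy hy0 hymin).not_ge (mem_closedBall_zero_iff.mp (hKR (interior_subset hyK)))

end SupportFunction

section WeightedSums

lemma finsum_mem_smul_eq_finsum_smul {α R N : Type*} [Zero R] [AddCommMonoid N]
    [SMulWithZero R N] {S : Set α} {υ : α → R} (hυ : ∀ x ∉ S, υ x = 0) (f : α → N) :
    ∑ᶠ x ∈ S, υ x • f x = ∑ᶠ x, υ x • f x := by
  rw [finsum_mem_def, Set.indicator_eq_self.mpr]
  exact Function.support_subset_iff'.mpr fun x hx => by rw [hυ x hx, zero_smul]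

lemma abs_finsum_mem_mul_le {α : Type*} {S : Set α} (hS : S.Finite) {υ g : α → ℝ} {ε : ℝ}
    (hg : ∀ x ∈ S, |g x| ≤ ε) : |∑ᶠ x ∈ S, υ x * g x| ≤ (∑ᶠ x ∈ S, |υ x|) * ε := by
  simp only [finsum_mem_eq_finite_toFinset_sum _ hS, Finset.sum_mul]
  refine (Finset.abs_sum_le_sum_abs _ _).trans (Finset.sum_le_sum fun x hx => ?_)
  rw [abs_mul]
  gcongr
  exact hg x (hS.mem_toFinset.mp hx)

lemma sq_finsum_mem_mul_le {α : Type*} {S : Set α} (hS : S.Finite) (υ g : α → ℝ) :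
    (∑ᶠ x ∈ S, υ x * g x) ^ 2 ≤
      (∑ᶠ x ∈ S, |υ x|) ^ 2 * sSup {r | ∃ x ∈ S, r = |g x| ^ 2} := by
  set m := sSup {r | ∃ x ∈ S, r = |g x| ^ 2}
  have hm : 0 ≤ m := by
    refine Real.sSup_nonneg ?_
    rintro _ ⟨x, _, rfl⟩
    positivity
  have hbdd : BddAbove {r | ∃ x ∈ S, r = |g x| ^ 2} := by
    refine ((hS.image fun x => |g x| ^ 2).subset ?_).bddAbove
    rintro _ ⟨x, hx, rfl⟩
    exact ⟨x, hx, rfl⟩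
  have hg (x) (hx : x ∈ S) : |g x| ≤ √m := Real.le_sqrt_of_sq_le (le_csSup hbdd ⟨x, hx, rfl⟩)
  calc (∑ᶠ x ∈ S, υ x * g x) ^ 2 = |∑ᶠ x ∈ S, υ x * g x| ^ 2 := (sq_abs _).symm
    _ ≤ ((∑ᶠ x ∈ S, |υ x|) * √m) ^ 2 := by gcongr; exact abs_finsum_mem_mul_le hS hg
    _ = (∑ᶠ x ∈ S, |υ x|) ^ 2 * m := by rw [mul_pow, Real.sq_sqrt hm]

lemma exp_finsum_mem_mul_le {α : Type*} {S : Set α} (hS : S.Finite) {υ g : α → ℝ} {ε : ℝ}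
    (hg : ∀ x ∈ S, |g x| ≤ ε) (hε : (∑ᶠ x ∈ S, |υ x|) * ε ≤ 1) :
    Real.exp (∑ᶠ x ∈ S, υ x * g x) ≤ 1 + (∑ᶠ x ∈ S, υ x * g x) +
      (∑ᶠ x ∈ S, |υ x|) ^ 2 * sSup {r | ∃ x ∈ S, r = |g x| ^ 2} := by
  have htaylor := Real.abs_exp_sub_one_sub_id_le ((abs_finsum_mem_mul_le hS hg).trans hε)
  linarith [le_of_abs_le htaylor, sq_finsum_mem_mul_le hS υ g]

end WeightedSums

theorem admissible_lattice_support_bound_general {n : ℕ} {Λ₀ : Set (Euc n)}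
    (hΛ₀ : IsLattice Λ₀) (hmin : minNorm Λ₀ = 1)
    (hind : LinearIndepOn ℝ id (projMap '' minVecs Λ₀)) {υ : Euc n → ℝ}
    (heutaxy : ∑ᶠ x ∈ minVecs Λ₀, υ x • projMap x = (LinearMap.id : Euc n →ₗ[ℝ] Euc n)) :
    ∃ ε > (0 : ℝ), ∃ C > (0 : ℝ), ∀ K : Set (Euc n), -K = K →
      closedBall 0 (1 - ε) ⊆ K → K ⊆ closedBall 0 (1 + ε) →
      ∃ Λ : Set (Euc n), IsLattice Λ ∧ IsAdmissible Λ K ∧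
        latDet Λ / latDet Λ₀ ≤
          1 + (∑ᶠ x ∈ minVecs Λ₀, υ x * (suppFn K x - 1)) +
            C * sSup {r | ∃ x ∈ minVecs Λ₀, r = |suppFn K x - 1| ^ 2} := by
  have hfin := hΛ₀.finite_minVecs
  have hunit (x) (hx : x ∈ minVecs Λ₀) : ‖x‖ = 1 := by
    rw [norm_of_mem_minVecs hx, hmin, Real.sqrt_one]
  obtain ⟨c, hsolve⟩ := exists_isSymmetric_inner_eq hind
  obtain ⟨r, hr, hlong⟩ := hΛ₀.exists_sqrt_minNorm_lt_le_norm
  rw [hmin, Real.sqrt_one] at hr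
  set V := ∑ᶠ x ∈ minVecs Λ₀, |υ x|
  obtain ⟨ε, hε, hε1, hcε, hVε, hgap⟩ := exists_pos_perturbation_size c V hr
  refine ⟨ε, hε, V ^ 2 + 1, by positivity, fun K hK hin hout => ?_⟩
  have hsupp (x) (hx : x ∈ minVecs Λ₀) : |suppFn K x - 1| ≤ ε :=
    abs_suppFn_sub_one_le hε1 hin hout (hunit x hx)
  obtain ⟨M, hMsymm, hMsupp, hMnorm⟩ := hsolve (fun x => suppFn K x - 1) ε
    (fun x => congrArg (· - 1) (suppFn_even hK x)) hε.le hsupp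
  refine ⟨(LinearMap.id + M : Euc n →ₗ[ℝ] Euc n) '' Λ₀,
    hΛ₀.image (det_id_add_ne_zero hMnorm hcε),
    isAdmissible_image hout ?_ ?_, ?_⟩
  · intro x hx
    rw [LinearMap.add_apply, LinearMap.id_apply, inner_add_right, real_inner_self_eq_norm_sq,
      hMsupp x hx, hunit x hx]
    linarith
  · intro y hy hy0 hymin
    calc 1 + ε < (1 - c * ε) * r := hgap
      _ ≤ (1 - c * ε) * ‖y‖ := by gcongr; exact hlong y hy hy0 hymin
      _ ≤ ‖(LinearMap.id + M : Euc n →ₗ[ℝ] Euc n) y‖ := one_sub_mul_norm_le_norm_id_add hMnorm y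
  · set t := ∑ᶠ x ∈ minVecs Λ₀, υ x * (suppFn K x - 1)
    set m := sSup {r | ∃ x ∈ minVecs Λ₀, r = |suppFn K x - 1| ^ 2}
    have htrace : LinearMap.trace ℝ (Euc n) M = t :=
      (trace_eq_finsum_mem_of_eutaxy hfin heutaxy M).trans
        (finsum_mem_congr rfl fun x hx => by rw [hMsupp x hx])
    calc _ ≤ Real.exp t :=
          htrace ▸ hΛ₀.latDet_image_id_add_div_le_exp_trace hMsymm hMnorm hcε
      _ ≤ 1 + t + V ^ 2 * m := exp_finsum_mem_mul_le hfin hsupp hVε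
      _ ≤ 1 + t + (V ^ 2 + 1) * m := by
        have : 0 ≤ m := Real.sSup_nonneg (by rintro _ ⟨x, _, rfl⟩; positivity)
        linarith

/-- Theorem 3.9(i): if the critical lattice `Λ₀` of `Bⁿ`, unique up to
rotation, is minimally extreme with eutaxy coefficients `υ`, then every nearly spherical
body `K` admits an admissible lattice `Λ` with
`d(Λ)/d(Λ₀) ≤ 1 + Σ υ_x (h_K(x) - 1) + C max |h_K(x) - 1|²`. -/
theorem admissible_lattice_support_bound (n : ℕ) (hn : 2 ≤ n) (Λ₀ : Set (Euc n))
    (hcrit : IsCriticalLattice Λ₀ (unitBall n))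
    (huniq : ∀ Λ : Set (Euc n), IsCriticalLattice Λ (unitBall n) →
      ∃ U : Euc n ≃ₗᵢ[ℝ] Euc n, Λ = ⇑U '' Λ₀)
    (hmin : minNorm Λ₀ = 1)
    (hcard : (minVecs Λ₀).ncard = n * (n + 1))
    (hperfect : IsPerfectCfg (minVecs Λ₀))
    (υ : Euc n → ℝ)
    (hpos : ∀ x ∈ minVecs Λ₀, 0 < υ x) (hzero : ∀ x ∉ minVecs Λ₀, υ x = 0)
    (hυsym : ∀ x, υ x = υ (-x))
    (heutaxy : ∑ᶠ x, υ x • projMap x = (LinearMap.id : Euc n →ₗ[ℝ] Euc n)) :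
    ∃ ε > (0 : ℝ), ∃ C > (0 : ℝ), ∀ K : Set (Euc n), IsSymCB K →
      Metric.closedBall 0 (1 - ε) ⊆ K → K ⊆ Metric.closedBall 0 (1 + ε) →
      ∃ Λ : Set (Euc n), IsLattice Λ ∧ IsAdmissible Λ K ∧
        latDet Λ / latDet Λ₀ ≤
          1 + (∑ᶠ x ∈ minVecs Λ₀, υ x * (suppFn K x - 1)) +
            C * sSup {r | ∃ x ∈ minVecs Λ₀, r = |suppFn K x - 1| ^ 2} := by
  obtain ⟨ε, hε, C, hC, hbound⟩ := admissible_lattice_support_bound_general hcrit.1 hmin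
    (hcrit.1.linearIndepOn_image_projMap_minVecs hperfect hcard.le)
    ((finsum_mem_smul_eq_finsum_smul hzero projMap).trans heutaxy)
  exact ⟨ε, hε, C, hC, fun K hK => hbound K hK.symm⟩

end
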